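/- Let r ≥ 1 and work in the field ℚ(u_1,…,u_r) of rational functions in r indeterminates over ℚ; set q_i = u_i^2. Let m_1 ≥ m_2 ≥ … ≥ m_r ≥ 0 be integers, put e_j = 2m_j + 2r + 1 − 2j, and let H_m denote the complete homogeneous symmetric polynomial of degree m in the 2r elements q_1,…,q_r, q_1^{−1},…,q_r^{−1}. Then (the Jacobi–Trudy identity for the spinor representations of Spin(2r), in alternant form): det[ u_i^{e_j} + u_i^{−e_j} ]_{i,j=1}^{r} + det[ u_i^{e_j} − u_i^{−e_j} ]_{i,j=1}^{r} = ( ∏_{i=1}^{r}(u_i + u_i^{−1}) · det[ H_{m_j + i − j} − H_{m_j + 1 − i − j} ]_{i,j=1}^{r} + ∏_{i=1}^{r}(u_i − u_i^{−1}) · det[ H_{m_j + i − j} + H_{m_j + 1 − i − j} ]_{i,j=1}^{r} ) · det[ (q_i + q_i^{−1})^{r − j} ]_{i,j=1}^{r}. -/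

import Mathlib

open Finset MvPolynomial

/-- Complete homogeneous symmetric polynomial of degree `m` (`ℤ`-indexed; zero for `m < 0`)
in the family of elements `x : ι → R`: the sum of all monomials of total degree `m`. -/
noncomputable def hpoly {R : Type*} [CommRing R] {ι : Type*} [Fintype ι] [DecidableEq ι]
    (x : ι → R) (m : ℤ) : R :=
  if m < 0 then 0
  else ∑ d ∈ (Fintype.piFinset fun _ : ι => Finset.range (m.toNat + 1)).filter
      (fun d => ∑ i, d i = m.toNat),
    ∏ i, x i ^ d i

/-!
Each of the two alternants satisfies its own Jacobi–Trudy identity; the theorem is their sum.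
Let `ε = ±1`, `s = r - 1`, `y_i = q_i + q_i⁻¹`.

Since `∑ H_n t^n = ∏_k (1 - y_k t + t²)⁻¹`, multiplying by `E_i(t) = ∏_{k ≠ i} (1 - y_k t + t²)`
and by `1 - ε t` gives `(1 - ε t) / (1 - y_i t + t²)`. Its coefficients are `p_a(y_i)`, with `p_a`
monic of degree `a`, and `u^(2a+1) + ε u^(-2a-1) = (u + ε u⁻¹) p_a(u² + u⁻²)`. So the entries of
the alternant are, up to the row factor `u_i + ε u_i⁻¹`, convolutions of the coefficients of `E_i`
with `H_n - ε H_{n-1}` (`sum_cofactorCoeff`). As `E_i` is palindromic of degree `2s`, folding this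
convolution about its middle (`sum_fold`) gives a matrix factorisation `(p_{m_j + s - j}(y_i)) = A G`
in which `G` is the Jacobi–Trudy matrix and `A` does not depend on `m` (`spinMatrix_factor`).

For `m = 0` the matrix `G` is unitriangular, so `det A = det (p_{s - j}(y_i))`, which is the
Vandermonde determinant `det (y_i^(s - j))` because each `p_a` is monic of degree `a`
(`det_cofactorCoeff`).
-/

lemma psMk_pow_mul {K : Type*} [CommRing K] (a : K) :
    (PowerSeries.mk fun n => a ^ n) * (1 - PowerSeries.C a * PowerSeries.X) = 1 := by
  ext n
  rw [mul_sub, mul_one, mul_left_comm]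
  cases n with
  | zero => simp
  | succ n => simp [PowerSeries.coeff_succ_mul_X, PowerSeries.coeff_one, pow_succ']

lemma hpoly_of_neg {K : Type*} [CommRing K] {ι : Type*} [Fintype ι] [DecidableEq ι]
    (x : ι → K) {n : ℤ} (hn : n < 0) : hpoly x n = 0 := by
  simp [hpoly, hn]

lemma hpoly_zero {K : Type*} [CommRing K] {ι : Type*} [Fintype ι] [DecidableEq ι]
    (x : ι → K) : hpoly x 0 = 1 := by
  have : ((Fintype.piFinset fun _ : ι => Finset.range ((0 : ℤ).toNat + 1)).filter
      (fun d => ∑ i, d i = (0 : ℤ).toNat)) = {0} := by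
    ext d
    simp [funext_iff]
  rw [hpoly, if_neg (by simp), this]
  simp

/-- The generating function of the complete homogeneous symmetric polynomials is a product of
geometric series. -/
lemma mk_hpoly {K : Type*} [CommRing K] {ι : Type*} [Fintype ι] [DecidableEq ι] (x : ι → K) :
    (PowerSeries.mk fun n : ℕ => hpoly x n) = ∏ i, PowerSeries.mk fun n => x i ^ n := by
  ext n
  rw [PowerSeries.coeff_prod, PowerSeries.coeff_mk, hpoly, if_neg (by simp)]
  simp only [PowerSeries.coeff_mk, Int.toNat_natCast]
  refine Finset.sum_bij' (fun d _ => Finsupp.equivFunOnFinite.symm d) (fun l _ => ⇑l)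
    ?_ ?_ ?_ ?_ ?_
  · intro d hd
    simp only [Finset.mem_filter] at hd
    simp [Finset.mem_finsuppAntidiag, hd.2]
  · intro l hl
    rw [Finset.mem_finsuppAntidiag] at hl
    simp only [Finset.mem_filter, Fintype.mem_piFinset, Finset.mem_range, Nat.lt_succ_iff]
    refine ⟨fun i => ?_, hl.1⟩
    rw [← hl.1]
    exact Finset.single_le_sum (f := fun i => l i) (fun _ _ => Nat.zero_le _) (Finset.mem_univ i)
  · intros; rfl
  · intros; ext; rfl
  · intros; rfl

lemma mk_hpoly_mul_prod {K : Type*} [CommRing K] {ι : Type*} [Fintype ι] [DecidableEq ι]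
    (x : ι → K) :
    (PowerSeries.mk fun n : ℕ => hpoly x n) *
      ∏ i, (1 - PowerSeries.C (x i) * PowerSeries.X) = 1 := by
  rw [mk_hpoly, ← Finset.prod_mul_distrib]
  exact Finset.prod_eq_one fun i _ => psMk_pow_mul (x i)

/-- The palindromic quadratic factor `1 - y t + t²`; for `y = q + q⁻¹` it is
`(1 - q t)(1 - q⁻¹ t)`. -/
noncomputable def quadFactor {K : Type*} [CommRing K] (y : K) : Polynomial K :=
  1 - Polynomial.C y * Polynomial.X + Polynomial.X ^ 2

lemma natDegree_quadFactor_le {K : Type*} [CommRing K] (y : K) :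
    (quadFactor y).natDegree ≤ 2 := by
  unfold quadFactor
  compute_degree

lemma natDegree_prod_quadFactor_le {K ι : Type*} [CommRing K] (s : Finset ι) (y : ι → K) :
    (∏ i ∈ s, quadFactor (y i)).natDegree ≤ 2 * s.card := by
  refine (Polynomial.natDegree_prod_le _ _).trans ?_
  refine (Finset.sum_le_card_nsmul _ _ 2 fun i _ => natDegree_quadFactor_le (y i)).trans ?_
  simp [mul_comm]

lemma reflect_prod_quadFactor {K ι : Type*} [CommRing K] [DecidableEq ι]
    (s : Finset ι) (y : ι → K) :
    (∏ i ∈ s, quadFactor (y i)).reflect (2 * s.card) = ∏ i ∈ s, quadFactor (y i) := by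
  induction s using Finset.induction_on with
  | empty => simp [Polynomial.reflect_one]
  | insert a s ha ih =>
    rw [Finset.prod_insert ha, Finset.card_insert_of_notMem ha, mul_add, mul_one, add_comm,
      Polynomial.reflect_mul _ _ (natDegree_quadFactor_le _) (natDegree_prod_quadFactor_le s y), ih]
    congr 1
    have h1 : Polynomial.reflect 2 (Polynomial.C (y a) * Polynomial.X) =
        Polynomial.C (y a) * Polynomial.X := by
      simpa [Polynomial.revAt_le] using Polynomial.reflect_C_mul_X_pow 2 1 (c := y a)
    rw [quadFactor, Polynomial.reflect_add, Polynomial.reflect_sub, h1, Polynomial.reflect_one,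
      Polynomial.reflect_monomial, Polynomial.revAt_le le_rfl]
    simp
    ring

/-- A palindromic sum of odd length, folded about its middle term. -/
lemma sum_palindrome {K : Type*} [CommRing K] (s : ℕ) (c : ℕ → K) (F : ℤ → K)
    (hc : ∀ k ≤ 2 * s, c (2 * s - k) = c k) :
    ∑ k ∈ Finset.range (2 * s + 1), c k * F ((s : ℤ) - k) =
      c s * F 0 + ∑ l ∈ Finset.range s, c (s + (l + 1)) * (F (l + 1) + F (-(l + 1))) := by
  rw [show 2 * s + 1 = s + (s + 1) by ring, Finset.sum_range_add, Finset.sum_range_succ',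
    ← Finset.sum_range_reflect]
  simp only [mul_add, Finset.sum_add_distrib]
  have h1 : ∀ l ∈ Finset.range s, c (s - 1 - l) * F ((s : ℤ) - ((s - 1 - l : ℕ) : ℤ)) =
      c (s + (l + 1)) * F (l + 1) := by
    intro l hl
    rw [Finset.mem_range] at hl
    rw [← hc (s + (l + 1)) (by omega)]
    congr 2 <;> omega
  rw [Finset.sum_congr rfl h1]
  have h2 : ∀ l ∈ Finset.range s, c (s + (l + 1)) * F ((s : ℤ) - ((s + (l + 1) : ℕ) : ℤ)) =
      c (s + (l + 1)) * F (-(l + 1)) := by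
    intro l _
    congr 2
    push_cast
    ring
  rw [Finset.sum_congr rfl h2]
  simp
  ring

/-- Summation by parts for the folded sum applied to `F l = H (h + l) - ε H (h + l - 1)`: the
antisymmetry `G (-l) = -ε G (l - 1)` of `G l = H (h + l) - ε H (h - l - 1)` turns it into a
combination of `G 0, …, G s`. -/
lemma sum_fold {K : Type*} [CommRing K] (s : ℕ) (c : ℕ → K) (H : ℤ → K) (ε : K) (hε : ε * ε = 1)
    (hc : ∀ k ≤ 2 * s, c (2 * s - k) = c k) (hc0 : c (2 * s + 1) = 0) (h : ℤ) :
    ∑ k ∈ Finset.range (2 * s + 1), c k * (H (h + s - k) - ε * H (h + s - k - 1)) =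
      ∑ l ∈ Finset.range (s + 1), (c (s + l) - ε * c (s + l + 1)) *
        (H (h + l) - ε * H (h - l - 1)) := by
  have key := sum_palindrome s c (fun l => H (h + l) - ε * H (h + l - 1)) hc
  simp only [← add_sub_assoc] at key
  rw [key]
  have h1 : ∀ l ∈ Finset.range s, c (s + (l + 1)) *
      (H (h + ((l : ℤ) + 1)) - ε * H (h + ((l : ℤ) + 1) - 1) +
        H (h + -((l : ℤ) + 1)) - ε * H (h + -((l : ℤ) + 1) - 1)) =
      c (s + (l + 1)) * (H (h + ((l + 1 : ℕ) : ℤ)) - ε * H (h - ((l + 1 : ℕ) : ℤ) - 1)) -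
      ε * c (s + l + 1) * (H (h + l) - ε * H (h - l - 1)) := by
    intro l _
    rw [show h + ((l : ℤ) + 1) - 1 = h + l by ring, show h + -((l : ℤ) + 1) = h - l - 1 by ring]
    push_cast
    rw [show h - ((l : ℤ) + 1) - 1 = h - l - 1 - 1 by ring, add_assoc s l 1]
    linear_combination (-c (s + (l + 1)) * H (h - l - 1)) * hε
  rw [Finset.sum_congr rfl h1, Finset.sum_sub_distrib]
  simp only [sub_mul _ (ε * _), Finset.sum_sub_distrib]
  rw [Finset.sum_range_succ' (fun l => c (s + l) * _),
    Finset.sum_range_succ (fun l => ε * c (s + l + 1) * _), ← two_mul, hc0]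
  simp
  ring

/-- The polynomials `p_a` with generating function `(1 - ε t) / (1 - y t + t²)`; at `y = u² + u⁻²`
and `ε = ±1` they are the quotients `(u^(2a+1) + ε u^(-2a-1)) / (u + ε u⁻¹)`. -/
noncomputable def spinPoly {K : Type*} [CommRing K] (ε : K) : ℕ → Polynomial K
  | 0 => 1
  | 1 => Polynomial.X - Polynomial.C ε
  | n + 2 => Polynomial.X * spinPoly ε (n + 1) - spinPoly ε n

lemma spinPoly_deg {K : Type*} [CommRing K] [Nontrivial K] (ε : K) (n : ℕ) :
    (spinPoly ε n).natDegree = n ∧ (spinPoly ε n).Monic ∧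
    (spinPoly ε (n + 1)).natDegree = n + 1 ∧ (spinPoly ε (n + 1)).Monic := by
  induction n with
  | zero => simp [spinPoly, Polynomial.monic_X_sub_C]
  | succ n ih =>
    obtain ⟨h1, h2, h3, h4⟩ := ih
    have hX : (Polynomial.X * spinPoly ε (n + 1)).Monic := Polynomial.monic_X.mul h4
    have hd : (Polynomial.X * spinPoly ε (n + 1)).natDegree = n + 2 := by
      rw [Polynomial.Monic.natDegree_mul Polynomial.monic_X h4, h3, Polynomial.natDegree_X]
      ring
    have hlt : (spinPoly ε n).natDegree < (Polynomial.X * spinPoly ε (n + 1)).natDegree := by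
      omega
    refine ⟨h3, h4, ?_, ?_⟩
    · rw [spinPoly, Polynomial.natDegree_sub_eq_left_of_natDegree_lt hlt, hd]
    · rw [spinPoly]
      exact hX.sub_of_left (Polynomial.degree_lt_degree hlt)

lemma mk_spinPoly_mul {K : Type*} [CommRing K] (ε y : K) :
    (PowerSeries.mk fun n => (spinPoly ε n).eval y) * (quadFactor y : PowerSeries K) =
      1 - PowerSeries.C ε * PowerSeries.X := by
  ext n
  simp only [quadFactor, Polynomial.coe_add, Polynomial.coe_sub, Polynomial.coe_one,
    Polynomial.coe_mul, Polynomial.coe_C, Polynomial.coe_X, Polynomial.coe_pow]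
  rw [mul_add, mul_sub, mul_one, mul_left_comm]
  match n with
  | 0 => simp [spinPoly]
  | 1 => simp [spinPoly, PowerSeries.coeff_succ_mul_X, PowerSeries.coeff_mul_X_pow',
      PowerSeries.coeff_one]
  | n + 2 =>
    simp [spinPoly, PowerSeries.coeff_succ_mul_X, PowerSeries.coeff_mul_X_pow',
      PowerSeries.coeff_one]

lemma spinPoly_eval {K : Type*} [Field K] (ε : K) (hε : ε * ε = 1) (u : K) (hu : u ≠ 0) (n : ℕ) :
    u ^ (2 * n + 1) + ε * u⁻¹ ^ (2 * n + 1) =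
      (u + ε * u⁻¹) * (spinPoly ε n).eval (u ^ 2 + (u ^ 2)⁻¹) ∧
    u ^ (2 * (n + 1) + 1) + ε * u⁻¹ ^ (2 * (n + 1) + 1) =
      (u + ε * u⁻¹) * (spinPoly ε (n + 1)).eval (u ^ 2 + (u ^ 2)⁻¹) := by
  have huv : u * u⁻¹ = 1 := mul_inv_cancel₀ hu
  rw [← inv_pow]
  generalize u⁻¹ = v at *
  induction n with
  | zero =>
    simp [spinPoly]
    linear_combination -(v + ε * u) * huv + v * hε
  | succ n ih =>
    refine ⟨ih.2, ?_⟩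
    rw [spinPoly, Polynomial.eval_sub, Polynomial.eval_mul, Polynomial.eval_X, mul_sub,
      mul_left_comm, ← ih.1, ← ih.2]
    have e1 : u ^ (2 * (n + 1) + 1) * v ^ 2 = u ^ (2 * n + 1) := by
      rw [show 2 * (n + 1) + 1 = 2 * n + 1 + 2 by ring, pow_add, mul_assoc, ← mul_pow, huv]; simp
    have e2 : v ^ (2 * (n + 1) + 1) * u ^ 2 = v ^ (2 * n + 1) := by
      rw [show 2 * (n + 1) + 1 = 2 * n + 1 + 2 by ring, pow_add, mul_assoc, ← mul_pow, mul_comm v,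
        huv]; simp
    rw [show 2 * (n + 1 + 1) + 1 = 2 * (n + 1) + 1 + 2 by ring, pow_add u, pow_add v]
    linear_combination -e1 - ε * e2

section

variable {K : Type*} [Field K] {s : ℕ}

/-- Coefficients of `∏_{k ≠ i} (1 - q_k t)(1 - q_k⁻¹ t)`. -/
noncomputable def cofactorCoeff (q : Fin (s + 1) → K) (i : Fin (s + 1)) (k : ℕ) : K :=
  (∏ a ∈ Finset.univ.erase i, quadFactor (q a + (q a)⁻¹)).coeff k

lemma cofactorCoeff_symm (q : Fin (s + 1) → K) (i : Fin (s + 1)) (k : ℕ) (hk : k ≤ 2 * s) :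
    cofactorCoeff q i (2 * s - k) = cofactorCoeff q i k := by
  have h := reflect_prod_quadFactor (Finset.univ.erase i) fun a => q a + (q a)⁻¹
  have hcard : (Finset.univ.erase i).card = s := by simp
  rw [hcard] at h
  unfold cofactorCoeff
  conv_rhs => rw [← h, Polynomial.coeff_reflect, Polynomial.revAt_le hk]

lemma cofactorCoeff_of_lt (q : Fin (s + 1) → K) (i : Fin (s + 1)) (k : ℕ) (hk : 2 * s < k) :
    cofactorCoeff q i k = 0 := by
  refine Polynomial.coeff_eq_zero_of_natDegree_lt
    ((natDegree_prod_quadFactor_le _ _).trans_lt ?_)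
  simpa using hk

lemma quadFactor_coe (q : K) (hq : q ≠ 0) :
    (quadFactor (q + q⁻¹) : PowerSeries K) =
      (1 - PowerSeries.C q * PowerSeries.X) * (1 - PowerSeries.C q⁻¹ * PowerSeries.X) := by
  have h : PowerSeries.C q * PowerSeries.C q⁻¹ = (1 : PowerSeries K) := by
    rw [← map_mul, mul_inv_cancel₀ hq, map_one]
  simp only [quadFactor, Polynomial.coe_add, Polynomial.coe_sub, Polynomial.coe_one,
    Polynomial.coe_mul, Polynomial.coe_C, Polynomial.coe_X, Polynomial.coe_pow, map_add]
  linear_combination -(PowerSeries.X ^ 2) * h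

/-- Multiplying the generating function of the `H_n` by the cofactor at `i` leaves only the
quadratic factor of `q_i` in the denominator. -/
lemma sum_cofactorCoeff (q : Fin (s + 1) → K) (hq : ∀ i, q i ≠ 0) (ε : K) (i : Fin (s + 1))
    (n : ℕ) :
    ∑ k ∈ Finset.range (2 * s + 1), cofactorCoeff q i k *
      (hpoly (Sum.elim q fun i => (q i)⁻¹) ((n : ℤ) - k) -
        ε * hpoly (Sum.elim q fun i => (q i)⁻¹) ((n : ℤ) - k - 1)) =
      (spinPoly ε n).eval (q i + (q i)⁻¹) := by
  set x := Sum.elim q fun i => (q i)⁻¹ with hx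
  set P := ∏ a ∈ Finset.univ.erase i, quadFactor (q a + (q a)⁻¹) with hP
  have hprod : ∏ j, (1 - PowerSeries.C (x j) * PowerSeries.X) =
      (quadFactor (q i + (q i)⁻¹) : PowerSeries K) * (P : PowerSeries K) := by
    rw [← Polynomial.coe_mul, hP, Finset.mul_prod_erase _ (fun a => quadFactor (q a + (q a)⁻¹)) (Finset.mem_univ i),
      Fintype.prod_sum_type, ← Finset.prod_mul_distrib, ← Polynomial.coeToPowerSeries.ringHom_apply,
      map_prod]
    refine Finset.prod_congr rfl fun a _ => ?_
    rw [Polynomial.coeToPowerSeries.ringHom_apply, quadFactor_coe _ (hq a)]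
    rfl
  have hH := mk_hpoly_mul_prod x
  rw [hprod] at hH
  have hser : (P : PowerSeries K) * ((PowerSeries.mk fun n : ℕ => hpoly x n) *
      (1 - PowerSeries.C ε * PowerSeries.X)) =
      PowerSeries.mk fun n => (spinPoly ε n).eval (q i + (q i)⁻¹) := by
    rw [← mk_spinPoly_mul ε (q i + (q i)⁻¹)]
    linear_combination (PowerSeries.mk fun n => (spinPoly ε n).eval (q i + (q i)⁻¹)) * hH
  have hF : (PowerSeries.mk fun n : ℕ => hpoly x n) * (1 - PowerSeries.C ε * PowerSeries.X) =
      PowerSeries.mk fun n : ℕ => hpoly x n - ε * hpoly x ((n : ℤ) - 1) := by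
    ext n
    rw [mul_sub, mul_one, mul_left_comm]
    cases n with
    | zero => simp [hpoly_of_neg]
    | succ n => simp [PowerSeries.coeff_succ_mul_X]
  have hn := congrArg (PowerSeries.coeff n) hser
  rw [hF, PowerSeries.coeff_mul, PowerSeries.coeff_mk,
    Finset.Nat.sum_antidiagonal_eq_sum_range_succ_mk] at hn
  rw [← hn]
  -- Both sums agree with the one over a range containing both index sets: beyond `2 s` the
  -- coefficient vanishes, beyond `n` the complete homogeneous polynomials do.
  have hL : ∀ k ∈ Finset.range (2 * s + 1 + (n + 1)), k ∉ Finset.range (2 * s + 1) →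
      cofactorCoeff q i k * (hpoly x ((n : ℤ) - k) - ε * hpoly x ((n : ℤ) - k - 1)) = 0 := by
    intro k _ hk
    rw [cofactorCoeff_of_lt q i k (by simpa using hk), zero_mul]
  have hR : ∀ k ∈ Finset.range (2 * s + 1 + (n + 1)), k ∉ Finset.range (n + 1) →
      cofactorCoeff q i k * (hpoly x ((n : ℤ) - k) - ε * hpoly x ((n : ℤ) - k - 1)) = 0 := by
    intro k _ hk
    rw [Finset.mem_range] at hk
    rw [hpoly_of_neg x (by omega), hpoly_of_neg x (by omega)]
    simp
  rw [Finset.sum_subset (Finset.range_mono (by omega)) hL,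
    ← Finset.sum_subset (Finset.range_mono (by omega)) hR]
  refine Finset.sum_congr rfl fun k hk => ?_
  rw [Finset.mem_range] at hk
  simp only [PowerSeries.coeff_mk, Polynomial.coeff_coe]
  rw [Nat.cast_sub (by omega)]
  rfl

/-- Factorisation of the alternant matrix: the left factor does not depend on `m`. -/
lemma spinMatrix_factor (q : Fin (s + 1) → K) (hq : ∀ i, q i ≠ 0) (ε : K) (hε : ε * ε = 1)
    (m : Fin (s + 1) → ℤ) (hm : ∀ j, 0 ≤ m j) :
    (Matrix.of fun i j : Fin (s + 1) =>
      (spinPoly ε (m j + s - j.val).toNat).eval (q i + (q i)⁻¹)) =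
    (Matrix.of fun i l : Fin (s + 1) =>
      cofactorCoeff q i (s + l.val) - ε * cofactorCoeff q i (s + l.val + 1)) *
    (Matrix.of fun l j : Fin (s + 1) =>
      hpoly (Sum.elim q fun i => (q i)⁻¹) (m j + (l.val : ℤ) - (j.val : ℤ)) -
        ε * hpoly (Sum.elim q fun i => (q i)⁻¹) (m j - (l.val : ℤ) - (j.val : ℤ) - 1)) := by
  ext i j
  have hmj := hm j
  have hj := j.isLt
  have h0 : ((m j + s - j.val).toNat : ℤ) = m j - j.val + s := by
    rw [Int.toNat_of_nonneg (by omega)]; ring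
  rw [Matrix.mul_apply, Matrix.of_apply, ← sum_cofactorCoeff q hq ε i, h0,
    sum_fold s (cofactorCoeff q i) _ ε hε (cofactorCoeff_symm q i)
      (cofactorCoeff_of_lt q i _ (by omega)) (m j - j.val), Finset.sum_range]
  refine Finset.sum_congr rfl fun l _ => ?_
  simp only [Matrix.of_apply]
  rw [show m j - j.val + (l.val : ℤ) = m j + (l.val : ℤ) - (j.val : ℤ) by ring,
    show m j - j.val - (l.val : ℤ) - 1 = m j - (l.val : ℤ) - (j.val : ℤ) - 1 by ring]

lemma det_spinPoly_zero (ε : K) (y : Fin (s + 1) → K) :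
    (Matrix.of fun i j : Fin (s + 1) =>
      (spinPoly ε ((0 : ℤ) + s - j.val).toNat).eval (y i)).det =
    (Matrix.of fun i j : Fin (s + 1) => y i ^ (s + 1 - 1 - j.val)).det := by
  have h := Matrix.det_eval_matrixOfPolynomials_eq_det_vandermonde y
    (fun j : Fin (s + 1) => spinPoly ε j) (fun j => (spinPoly_deg ε j).1)
    (fun j => (spinPoly_deg ε j).2.1)
  -- The columns appear in decreasing order of degree, on both sides.
  have h1 := Matrix.det_permute' (Fin.revPerm (n := s + 1)) (Matrix.vandermonde y)
  have h2 := Matrix.det_permute' (Fin.revPerm (n := s + 1))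
    (Matrix.of fun i j : Fin (s + 1) => (spinPoly ε j).eval (y i))
  rw [← h, ← h1] at h2
  convert h2 using 2
  · ext i j
    have hj := j.isLt
    simp only [Matrix.of_apply, Matrix.submatrix_apply, id, Fin.revPerm_apply, Fin.val_rev]
    congr 2
    omega
  · ext i j
    simp only [Matrix.of_apply, Matrix.submatrix_apply, id, Fin.revPerm_apply, Fin.val_rev,
      Matrix.vandermonde_apply]
    congr 1
    omega

/-- The left factor is evaluated at `m = 0`, where the matrix of complete homogeneous symmetric
polynomials is unitriangular. -/
lemma det_cofactorCoeff (q : Fin (s + 1) → K) (hq : ∀ i, q i ≠ 0) (ε : K) (hε : ε * ε = 1) :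
    (Matrix.of fun i l : Fin (s + 1) =>
      cofactorCoeff q i (s + l.val) - ε * cofactorCoeff q i (s + l.val + 1)).det =
    (Matrix.of fun i j : Fin (s + 1) => (q i + (q i)⁻¹) ^ (s + 1 - 1 - j.val)).det := by
  have h := congrArg Matrix.det (spinMatrix_factor q hq ε hε (fun _ => 0) fun _ => le_rfl)
  rw [det_spinPoly_zero, Matrix.det_mul] at h
  rw [h]
  refine (mul_one _).symm.trans (congrArg _ (Eq.symm ?_))
  rw [Matrix.det_of_isLowerTriangular, Finset.prod_eq_one]
  · intro i _
    rw [Matrix.of_apply, hpoly_of_neg _ (n := 0 - (i.val : ℤ) - (i.val : ℤ) - 1) (by omega),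
      zero_add, sub_self, hpoly_zero]
    ring
  · intro i j hij
    have hij' : i.val < j.val := hij
    rw [Matrix.of_apply, hpoly_of_neg _ (n := 0 + (i.val : ℤ) - (j.val : ℤ)) (by omega),
      hpoly_of_neg _ (n := 0 - (i.val : ℤ) - (j.val : ℤ) - 1) (by omega)]
    ring

/-- The Jacobi–Trudy identity for each of the two alternants, `ε = 1` and `ε = -1`. -/
lemma alternant_identity (u : Fin (s + 1) → K) (hu : ∀ i, u i ≠ 0) (ε : K) (hε : ε * ε = 1)
    (m : Fin (s + 1) → ℤ) (hm : ∀ j, 0 ≤ m j) :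
    (Matrix.of fun i j : Fin (s + 1) =>
        u i ^ (2 * m j + 2 * (s + 1 : ℕ) - 1 - 2 * (j.val : ℤ)) +
        ε * u i ^ (-(2 * m j + 2 * (s + 1 : ℕ) - 1 - 2 * (j.val : ℤ)))).det =
    (∏ i, (u i + ε * (u i)⁻¹)) *
      (Matrix.of fun i j : Fin (s + 1) =>
        hpoly (Sum.elim (fun i => u i ^ 2) fun i => (u i ^ 2)⁻¹)
          (m j + (i.val : ℤ) - (j.val : ℤ)) -
        ε * hpoly (Sum.elim (fun i => u i ^ 2) fun i => (u i ^ 2)⁻¹)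
          (m j - (i.val : ℤ) - (j.val : ℤ) - 1)).det *
      (Matrix.of fun i j : Fin (s + 1) =>
        (u i ^ 2 + (u i ^ 2)⁻¹) ^ (s + 1 - 1 - j.val)).det := by
  have hq : ∀ i, u i ^ 2 ≠ 0 := fun i => pow_ne_zero 2 (hu i)
  rw [← det_cofactorCoeff (fun i => u i ^ 2) hq ε hε, mul_assoc, mul_comm (Matrix.det _),
    ← Matrix.det_mul, ← spinMatrix_factor (fun i => u i ^ 2) hq ε hε m hm,
    ← Matrix.det_mul_column]
  congr 1
  ext i j
  have hmj := hm j
  have hj := j.isLt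
  simp only [Matrix.of_apply]
  rw [← (spinPoly_eval ε hε (u i) (hu i) _).1]
  have he : 2 * m j + 2 * ((s + 1 : ℕ) : ℤ) - 1 - 2 * (j.val : ℤ) =
      ((2 * (m j + s - j.val).toNat + 1 : ℕ) : ℤ) := by
    push_cast
    rw [Int.toNat_of_nonneg (by omega)]
    ring
  rw [he, zpow_neg, zpow_natCast, inv_pow]

end

/-- Jacobi–Trudy identity for the spinor representations of Spin(2r), in alternant form. -/
theorem spin_even_spinor_jacobi_trudy (r : ℕ) (hr : 1 ≤ r)
    (m : Fin r → ℤ) (hanti : Antitone m) (hnonneg : ∀ j, 0 ≤ m j) :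
    let K := FractionRing (MvPolynomial (Fin r) ℚ)
    let u : Fin r → K := fun i => algebraMap (MvPolynomial (Fin r) ℚ) K (X i)
    let q : Fin r → K := fun i => u i ^ 2
    let H : ℤ → K := hpoly (Sum.elim q fun i => (q i)⁻¹)
    Matrix.det (Matrix.of fun i j : Fin r =>
        u i ^ (2 * m j + 2 * r - 1 - 2 * (j.val : ℤ)) +
        u i ^ (-(2 * m j + 2 * r - 1 - 2 * (j.val : ℤ)))) +
    Matrix.det (Matrix.of fun i j : Fin r =>
        u i ^ (2 * m j + 2 * r - 1 - 2 * (j.val : ℤ)) -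
        u i ^ (-(2 * m j + 2 * r - 1 - 2 * (j.val : ℤ)))) =
    ((∏ i : Fin r, (u i + (u i)⁻¹)) *
      Matrix.det (Matrix.of fun i j : Fin r =>
        H (m j + (i.val : ℤ) - (j.val : ℤ)) - H (m j - (i.val : ℤ) - (j.val : ℤ) - 1)) +
     (∏ i : Fin r, (u i - (u i)⁻¹)) *
      Matrix.det (Matrix.of fun i j : Fin r =>
        H (m j + (i.val : ℤ) - (j.val : ℤ)) + H (m j - (i.val : ℤ) - (j.val : ℤ) - 1))) *
    Matrix.det (Matrix.of fun i j : Fin r =>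
        (q i + (q i)⁻¹) ^ (r - 1 - j.val)) := by
  intro K u q H
  obtain ⟨s, rfl⟩ : ∃ s, r = s + 1 := ⟨r - 1, by omega⟩
  have hu : ∀ i, u i ≠ 0 := fun i => by
    simp only [u, ne_eq, FaithfulSMul.algebraMap_eq_zero_iff]
    exact MvPolynomial.X_ne_zero i
  have h1 := alternant_identity u hu 1 (by ring) m hnonneg
  have h2 := alternant_identity u hu (-1) (by ring) m hnonneg
  simp only [one_mul] at h1
  simp only [neg_one_mul, ← sub_eq_add_neg, sub_neg_eq_add] at h2
  rw [add_mul]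
  exact congrArg₂ (· + ·) h1 h2
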